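/- arXiv:1410.5686 — 10 statements merged into one kernel-verified Lean document; each statement's English description precedes it below -/
import Mathlib

section
/- Let H be a separable real Hilbert space, 𝔘 ⊂ H a finite nonempty set, and x ∈ H. Let (P_n) be a sequence of Borel probability measures on H converging weakly to a Borel probability measure P such that for every u ∈ 𝔘 the pushforward measure P_u of P under y ↦ ⟨u,y⟩ has no atoms (its cumulative distribution function is continuous). Then D_RT(x,P_n) → D_RT(x,P) as n → ∞. -/
/-!
Weak convergence passes to the pushforwards under the continuous maps `y ↦ ⟪u, y⟫`. The half-lines
`Iic t` and `Ici t` have frontier `{t}`, so if the limit has no atom at `t`, the portmanteau theorem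
gives convergence of their masses. The depth is a minimum of finitely many such masses.
-/

open MeasureTheory Filter Topology
open scoped RealInnerProductSpace

/-- The one-dimensional depth `D₁(t, Q) = min{Q((−∞,t]), Q([t,∞))}`. -/
noncomputable def D1 (Q : Measure ℝ) (t : ℝ) : ℝ :=
  min (Q (Set.Iic t)).toReal (Q (Set.Ici t)).toReal

/-- The random Tukey depth `D_RT(x, P) = min_{u ∈ U} D₁(⟨u,x⟩, P_u)`, where `P_u` is the
pushforward of `P` under `y ↦ ⟨u,y⟩`. -/
noncomputable def DRT {H : Type*} [NormedAddCommGroup H] [InnerProductSpace ℝ H]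
    [MeasurableSpace H] (U : Finset H) (hU : U.Nonempty) (x : H) (P : Measure H) : ℝ :=
  U.inf' hU fun u => D1 (P.map fun y => ⟪u, y⟫) ⟪u, x⟫

lemma tendsto_measureReal_of_null_frontier {Ω ι : Type*} [MeasurableSpace Ω] [TopologicalSpace Ω]
    [OpensMeasurableSpace Ω] [HasOuterApproxClosed Ω] {l : Filter ι}
    {μ : ι → ProbabilityMeasure Ω} {ν : ProbabilityMeasure Ω} (h : Tendsto μ l (𝓝 ν))
    {E : Set Ω} (hE : (ν : Measure Ω) (frontier E) = 0) :
    Tendsto (fun i => (μ i : Measure Ω).real E) l (𝓝 ((ν : Measure Ω).real E)) :=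
  (ENNReal.tendsto_toReal (measure_ne_top _ E)).comp
    (ProbabilityMeasure.tendsto_measure_of_null_frontier_of_tendsto' h hE)

lemma tendsto_D1_of_null_singleton {ι : Type*} {l : Filter ι}
    {μ : ι → ProbabilityMeasure ℝ} {ν : ProbabilityMeasure ℝ} (h : Tendsto μ l (𝓝 ν))
    {t : ℝ} (ht : (ν : Measure ℝ) {t} = 0) :
    Tendsto (fun i => D1 (μ i) t) l (𝓝 (D1 ν t)) := by
  have hIic : (ν : Measure ℝ) (frontier (Set.Iic t)) = 0 := by rwa [frontier_Iic]
  have hIci : (ν : Measure ℝ) (frontier (Set.Ici t)) = 0 := by rwa [frontier_Ici]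
  exact (tendsto_measureReal_of_null_frontier h hIic).min
    (tendsto_measureReal_of_null_frontier h hIci)

theorem stmt_5_general {H ι : Type*} [NormedAddCommGroup H] [InnerProductSpace ℝ H]
    [MeasurableSpace H] [OpensMeasurableSpace H] {U : Finset H} (hU : U.Nonempty) {x : H}
    {l : Filter ι} {P : ι → ProbabilityMeasure H} {Q : ProbabilityMeasure H}
    (hPQ : Tendsto P l (𝓝 Q))
    (hQ : ∀ u ∈ U, ((Q : Measure H).map fun y => ⟪u, y⟫) {⟪u, x⟫} = 0) :
    Tendsto (fun i => DRT U hU x (P i)) l (𝓝 (DRT U hU x Q)) := by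
  refine Tendsto.finset_inf'_nhds_apply hU fun u hu => ?_
  have hu_cont : Continuous fun y : H => ⟪u, y⟫ := by fun_prop
  have hmap := ProbabilityMeasure.tendsto_map_of_tendsto_of_continuous P Q hPQ hu_cont
  exact tendsto_D1_of_null_singleton hmap (hQ u hu)

/-- If `P n → Q` weakly and each one-dimensional marginal `Q_u`, `u ∈ U`, has
no atoms, then the random Tukey depth converges: `D_RT(x, P n) → D_RT(x, Q)`. -/
theorem stmt_5 {H : Type*} [NormedAddCommGroup H] [InnerProductSpace ℝ H]
    [CompleteSpace H] [TopologicalSpace.SeparableSpace H]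
    [MeasurableSpace H] [BorelSpace H]
    (U : Finset H) (hU : U.Nonempty) (x : H)
    (P : ℕ → Measure H) (Q : Measure H)
    [∀ n, IsProbabilityMeasure (P n)] [IsProbabilityMeasure Q]
    (hweak : ∀ f : BoundedContinuousFunction H ℝ,
      Tendsto (fun n => ∫ y, f y ∂(P n)) atTop (nhds (∫ y, f y ∂Q)))
    (hcont : ∀ u ∈ U, ∀ t : ℝ, (Q.map fun y => ⟪u, y⟫) {t} = 0) :
    Tendsto (fun n => DRT U hU x (P n)) atTop (nhds (DRT U hU x Q)) := by
  exact stmt_5_general hU (P := fun n => ⟨P n, inferInstance⟩) (Q := ⟨Q, inferInstance⟩)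
    (ProbabilityMeasure.tendsto_iff_forall_integral_tendsto.2 hweak)
    fun u hu => hcont u hu ⟪u, x⟫
end

section
/- Let H be a separable real Hilbert space, 𝔘 ⊂ H a finite nonempty set, and P a Borel probability measure on H. Then the map x ↦ D_RT(x,P) = min_{u∈𝔘} min{P({y : ⟨u,y⟩ ≤ ⟨u,x⟩}), P({y : ⟨u,y⟩ ≥ ⟨u,x⟩})} is upper semi-continuous on H. -/
/-!
A point `a` lies in `(-∞, t]` for a closed set of `t`, so if `a ∉ (-∞, t]`, then `a ∉ (-∞, t']` for
all `t'` near `t`. By dominated convergence `Q ((-∞, t'] \ (-∞, t]) → 0` as `t' → t`, which makes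
`t ↦ Q (-∞, t]` upper semi-continuous. The same argument covers `[t, ∞)`, and upper semi-continuity
survives finite minima and composition with the continuous maps `x ↦ ⟪u, x⟫`.
-/

open MeasureTheory Filter Topology
open scoped RealInnerProductSpace

section UpperSemicontinuous

variable {X : Type*} [TopologicalSpace X]

lemma upperSemicontinuous_finset_inf' {ι β : Type*} [LinearOrder β] {s : Finset ι}
    (hs : s.Nonempty) {f : ι → X → β} (hf : ∀ i ∈ s, UpperSemicontinuous (f i)) :
    UpperSemicontinuous fun x => s.inf' hs fun i => f i x := by
  intro x c hc
  obtain ⟨i, hi, hic⟩ := (Finset.inf'_lt_iff hs).1 hc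
  filter_upwards [hf i hi x c hic] with y hy
  exact (Finset.inf'_lt_iff hs).2 ⟨i, hi, hy⟩

variable [FirstCountableTopology X] {α : Type*} [MeasurableSpace α]

lemma tendsto_measureReal_sdiff_of_isClosed (μ : Measure α) [IsFiniteMeasure μ] {s : X → Set α}
    (hmeas : ∀ x, MeasurableSet (s x)) (hclosed : ∀ a, IsClosed {x | a ∈ s x}) (x : X) :
    Tendsto (fun y => μ.real (s y \ s x)) (𝓝 x) (𝓝 0) := by
  have eventually_notMem (a : α) : ∀ᶠ y in 𝓝 x, a ∈ s y \ s x ↔ a ∈ (∅ : Set α) := by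
    by_cases hax : a ∈ s x
    · simp [hax]
    · filter_upwards [(hclosed a).isOpen_compl.mem_nhds hax] with y hay
      exact iff_of_false (fun h => hay h.1) (Set.notMem_empty a)
  have h : Tendsto (fun y => μ (s y \ s x)) (𝓝 x) (𝓝 (μ ∅)) :=
    tendsto_measure_of_tendsto_indicator_of_isFiniteMeasure (𝓝 x) μ
      (fun y => (hmeas y).diff (hmeas x)) eventually_notMem
  simpa only [Function.comp_def, measure_empty, ENNReal.toReal_zero] using!
    (ENNReal.tendsto_toReal (measure_ne_top μ ∅)).comp h

lemma upperSemicontinuous_measureReal_of_isClosed (μ : Measure α) [IsFiniteMeasure μ]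
    {s : X → Set α} (hmeas : ∀ x, MeasurableSet (s x)) (hclosed : ∀ a, IsClosed {x | a ∈ s x}) :
    UpperSemicontinuous fun x => μ.real (s x) := by
  intro x c hc
  have hsmall : ∀ᶠ y in 𝓝 x, μ.real (s y \ s x) < c - μ.real (s x) :=
    (tendsto_measureReal_sdiff_of_isClosed μ hmeas hclosed x).eventually_lt_const (sub_pos.2 hc)
  filter_upwards [hsmall] with y hy
  calc
    μ.real (s y) ≤ μ.real (s x ∪ s y \ s x) :=
      measureReal_mono (Set.sdiff_subset_iff.1 Set.Subset.rfl)
    _ ≤ μ.real (s x) + μ.real (s y \ s x) := measureReal_union_le _ _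
    _ < c := lt_sub_iff_add_lt'.1 hy

end UpperSemicontinuous

lemma upperSemicontinuous_D1 (Q : Measure ℝ) [IsFiniteMeasure Q] : UpperSemicontinuous (D1 Q) :=
  (upperSemicontinuous_measureReal_of_isClosed Q (s := Set.Iic) (fun _ => measurableSet_Iic)
      (fun _ => isClosed_Ici)).inf
    (upperSemicontinuous_measureReal_of_isClosed Q (s := Set.Ici) (fun _ => measurableSet_Ici)
      (fun _ => isClosed_Iic))

theorem stmt_6_general {H : Type*} [NormedAddCommGroup H] [InnerProductSpace ℝ H]
    [MeasurableSpace H] [OpensMeasurableSpace H] (U : Finset H) (hU : U.Nonempty)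
    (P : Measure H) [IsFiniteMeasure P] : UpperSemicontinuous fun x => DRT U hU x P :=
  upperSemicontinuous_finset_inf' hU fun _ _ =>
    (upperSemicontinuous_D1 _).comp (continuous_const.inner continuous_id)

/-- The random Tukey depth `x ↦ D_RT(x, P)` is upper semi-continuous:
for every `x` and `ε > 0` there is `δ > 0` with `D_RT(y,P) ≤ D_RT(x,P) + ε` whenever
`‖y − x‖ < δ`. -/
theorem stmt_6 {H : Type*} [NormedAddCommGroup H] [InnerProductSpace ℝ H]
    [CompleteSpace H] [TopologicalSpace.SeparableSpace H]
    [MeasurableSpace H] [BorelSpace H]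
    (U : Finset H) (hU : U.Nonempty)
    (P : Measure H) [IsProbabilityMeasure P] :
    ∀ x : H, ∀ ε > (0 : ℝ), ∃ δ > (0 : ℝ), ∀ y : H,
      ‖y - x‖ < δ → DRT U hU y P ≤ DRT U hU x P + ε := by
  intro x ε hε
  obtain ⟨δ, hδ, hball⟩ := Metric.eventually_nhds_iff.1
    (stmt_6_general U hU P x _ (lt_add_of_pos_right _ hε))
  exact ⟨δ, hδ, fun y hy => (hball (by rwa [dist_eq_norm])).le⟩
end

section
/- Let V be a nonempty compact subset of ℝ and P a Borel probability measure on C(V). Then the map x ↦ D_HR(x,P) is upper semi-continuous on C(V) with respect to the supremum norm. -/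
open MeasureTheory Filter Topology

/-- The half region depth: the minimum of the probability that `X` lies in the hypograph
of `x` and the probability that `X` lies in the epigraph of `x`. -/
noncomputable def DHR {V : Set ℝ} [CompactSpace V] [MeasurableSpace C(V, ℝ)]
    (x : C(V, ℝ)) (P : Measure C(V, ℝ)) : ℝ :=
  min (P {y | ∀ v, y v ≤ x v}).toReal (P {y | ∀ v, x v ≤ y v}).toReal

/-! The half regions of `x` are the order intervals `Iic x` and `Ici x`. Since the order is closed,
a point `y` outside `Iic x` stays outside `Iic x'` for all `x'` near `x`, so the indicator of
`Iic x' ∪ Iic x` converges pointwise to that of `Iic x` as `x' → x`. By dominated convergence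
`μ (Iic x') ≤ μ (Iic x' ∪ Iic x) → μ (Iic x)`, which is upper semicontinuity at `x`. The same holds
for `Ici`, and a minimum of upper semicontinuous functions is upper semicontinuous. -/

instance orderClosedTopology_continuousMap {X Y : Type*} [TopologicalSpace X] [TopologicalSpace Y]
    [PartialOrder Y] [OrderClosedTopology Y] : OrderClosedTopology C(X, Y) where
  isClosed_le' := (isClosed_le_prod (α := X → Y)).preimage <|
    continuous_coeFun.prodMap continuous_coeFun

lemma upperSemicontinuous_iff_norm_sub_lt {E : Type*} [SeminormedAddCommGroup E] {f : E → ℝ} :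
    UpperSemicontinuous f ↔
      ∀ x, ∀ ε > 0, ∃ δ > 0, ∀ y, ‖y - x‖ < δ → f y ≤ f x + ε := by
  simp only [← dist_eq_norm]
  constructor
  · intro hf x ε hε
    obtain ⟨δ, hδ, h⟩ := Metric.eventually_nhds_iff.1 (hf x _ (lt_add_of_pos_right _ hε))
    exact ⟨δ, hδ, fun y hy ↦ (h hy).le⟩
  · intro hf x c hc
    obtain ⟨δ, hδ, h⟩ := hf x ((c - f x) / 2) (half_pos (sub_pos.2 hc))
    exact Metric.eventually_nhds_iff.2 ⟨δ, hδ, fun y hy ↦ (h y hy).trans_lt (by linarith)⟩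

section MeasureFamily

variable {X Y : Type*} [TopologicalSpace X] [FirstCountableTopology X] [MeasurableSpace Y]
  (μ : Measure Y) [IsFiniteMeasure μ] {s : X → Set Y}

lemma tendsto_measureReal_union_of_isClosed_setOf_mem (hs : ∀ x, MeasurableSet (s x))
    (hclosed : ∀ y, IsClosed {x | y ∈ s x}) (x : X) :
    Tendsto (fun x' ↦ μ.real (s x' ∪ s x)) (𝓝 x) (𝓝 (μ.real (s x))) := by
  have eventually_mem_union_iff (y : Y) : ∀ᶠ x' in 𝓝 x, y ∈ s x' ∪ s x ↔ y ∈ s x := by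
    by_cases hy : y ∈ s x
    · exact .of_forall fun _ ↦ iff_of_true (.inr hy) hy
    · filter_upwards [(hclosed y).isOpen_compl.mem_nhds hy] with x' hx'
      exact or_iff_right hx'
  exact (ENNReal.tendsto_toReal (measure_ne_top μ (s x))).comp <|
    tendsto_measure_of_tendsto_indicator_of_isFiniteMeasure (𝓝 x) μ
      (fun x' ↦ (hs x').union (hs x)) eventually_mem_union_iff

lemma upperSemicontinuous_measureReal_of_isClosed_setOf_mem (hs : ∀ x, MeasurableSet (s x))
    (hclosed : ∀ y, IsClosed {x | y ∈ s x}) :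
    UpperSemicontinuous fun x ↦ μ.real (s x) := by
  intro x c hc
  have tendsto_union := tendsto_measureReal_union_of_isClosed_setOf_mem μ hs hclosed x
  filter_upwards [tendsto_union.eventually_lt_const hc] with x' hx'
  exact (measureReal_mono Set.subset_union_left).trans_lt hx'

end MeasureFamily

section Order

variable {E : Type*} [TopologicalSpace E] [FirstCountableTopology E] [Preorder E]
  [ClosedIicTopology E] [ClosedIciTopology E] [MeasurableSpace E] [OpensMeasurableSpace E]
  (μ : Measure E) [IsFiniteMeasure μ]

lemma upperSemicontinuous_measureReal_Iic : UpperSemicontinuous fun x ↦ μ.real (Set.Iic x) :=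
  upperSemicontinuous_measureReal_of_isClosed_setOf_mem μ (fun _ ↦ measurableSet_Iic)
    fun _ ↦ isClosed_Ici

lemma upperSemicontinuous_measureReal_Ici : UpperSemicontinuous fun x ↦ μ.real (Set.Ici x) :=
  upperSemicontinuous_measureReal_of_isClosed_setOf_mem μ (fun _ ↦ measurableSet_Ici)
    fun _ ↦ isClosed_Iic

theorem stmt_7_general :
    UpperSemicontinuous fun x ↦ min (μ.real (Set.Iic x)) (μ.real (Set.Ici x)) :=
  (upperSemicontinuous_measureReal_Iic μ).inf (upperSemicontinuous_measureReal_Ici μ)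

end Order

/-- For `V` a nonempty compact subset of `ℝ` and `P` a Borel probability
measure on `C(V)`, the half region depth `x ↦ D_HR(x, P)` is upper semi-continuous w.r.t.
the supremum norm. -/
theorem stmt_7 (V : Set ℝ) [CompactSpace V] (hV : IsCompact V) (hne : V.Nonempty)
    [MeasurableSpace C(V, ℝ)] [BorelSpace C(V, ℝ)]
    (P : Measure C(V, ℝ)) [IsProbabilityMeasure P] :
    ∀ x : C(V, ℝ), ∀ ε > (0 : ℝ), ∃ δ > (0 : ℝ), ∀ y : C(V, ℝ),
      ‖y - x‖ < δ → DHR y P ≤ DHR x P + ε :=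
  -- `DHR y P` unfolds to `min (P.real (Set.Iic y)) (P.real (Set.Ici y))`.
  upperSemicontinuous_iff_norm_sub_lt.1 (stmt_7_general P)
end

section
/- Let V be a compact subset of ℝ with Lebesgue measure λ(V) > 0 and P a Borel probability measure on C(V). Then the map x ↦ D_MHR(x,P) is upper semi-continuous on C(V) with respect to the supremum norm. -/
/-!
For fixed `v`, the condition `y v ≤ x v` is closed in `(x, y)`, so its indicator is upper
semi-continuous. The reverse Fatou lemma preserves upper semi-continuity under dominated
integration. Integrating over `v` makes `λ {v | y v ≤ x v}` upper semi-continuous in the pair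
`(x, y)`, which in particular makes it measurable in `y`; integrating over `y` then gives the first
integral in the depth. The second is symmetric, and minima preserve upper semi-continuity.
-/

open MeasureTheory Filter Topology

/-- Lebesgue measure on the subtype `V ⊆ ℝ`. -/
noncomputable def lamV (V : Set ℝ) : Measure V :=
  Measure.comap Subtype.val volume

/-- The modified half region depth
`D_MHR(x,P) = min{∫ λ{v : y v ≤ x v} dP(y), ∫ λ{v : x v ≤ y v} dP(y)} / λ(V)`. -/
noncomputable def DMHR {V : Set ℝ} [CompactSpace V] [MeasurableSpace C(V, ℝ)]
    (x : C(V, ℝ)) (P : Measure C(V, ℝ)) : ℝ :=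
  min (∫ y, (lamV V {v | y v ≤ x v}).toReal ∂P)
      (∫ y, (lamV V {v | x v ≤ y v}).toReal ∂P) / (lamV V Set.univ).toReal

theorem upperSemicontinuous_toReal {X : Type*} [TopologicalSpace X]
    {f : X → ENNReal} (hf : UpperSemicontinuous f) (hf_top : ∀ x, f x ≠ ⊤) :
    UpperSemicontinuous fun x ↦ (f x).toReal := fun x c hc ↦
  (hf x (ENNReal.ofReal c) ((ENNReal.lt_ofReal_iff_toReal_lt (hf_top x)).2 hc)).mono
    fun _ ↦ ENNReal.toReal_lt_of_lt_ofReal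

section ParametricIntegrals

variable {X Y Ω : Type*} [TopologicalSpace X] [FirstCountableTopology X]
  [TopologicalSpace Y] [FirstCountableTopology Y] [MeasurableSpace Y] [OpensMeasurableSpace Y]
  [MeasurableSpace Ω] (μ : Measure Ω)

theorem upperSemicontinuous_lintegral_of_dominated {f : X → Ω → ENNReal} (bound : Ω → ENNReal)
    (hf_meas : ∀ x, Measurable (f x)) (h_bound : ∀ x, f x ≤ᵐ[μ] bound)
    (h_fin : ∫⁻ ω, bound ω ∂μ ≠ ⊤) (hf : ∀ᵐ ω ∂μ, UpperSemicontinuous fun x ↦ f x ω) :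
    UpperSemicontinuous fun x ↦ ∫⁻ ω, f x ω ∂μ := by
  refine upperSemicontinuous_iff_frequently.2 fun x c hc ↦ ?_
  obtain ⟨u, hux, huc⟩ := exists_seq_forall_of_frequently hc
  calc
    c ≤ limsup (fun n ↦ ∫⁻ ω, f (u n) ω ∂μ) atTop :=
      le_limsup_of_frequently_le (Frequently.of_forall huc)
    _ ≤ ∫⁻ ω, limsup (fun n ↦ f (u n) ω) atTop ∂μ :=
      limsup_lintegral_le bound (fun n ↦ hf_meas (u n)) (fun n ↦ h_bound (u n)) h_fin
    _ ≤ ∫⁻ ω, f x ω ∂μ :=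
      lintegral_mono_ae <| hf.mono fun ω hω ↦
        (limsup_le_limsup_of_le (u := fun x ↦ f x ω) hux).trans (hω.limsup_le x)

theorem upperSemicontinuous_measure_of_isClosed [IsFiniteMeasure μ] {s : X → Set Ω}
    (hs_meas : ∀ x, MeasurableSet (s x)) (hs_closed : ∀ᵐ ω ∂μ, IsClosed {x | ω ∈ s x}) :
    UpperSemicontinuous fun x ↦ μ (s x) := by
  have h_indicator : UpperSemicontinuous fun x ↦ ∫⁻ ω, (s x).indicator 1 ω ∂μ := by
    refine upperSemicontinuous_lintegral_of_dominated μ 1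
      (fun x ↦ measurable_one.indicator (hs_meas x))
      (fun x ↦ ae_of_all μ (Set.indicator_le_self' fun _ _ ↦ zero_le_one)) ?_
      (hs_closed.mono fun ω hω ↦ hω.upperSemicontinuous_indicator zero_le_one)
    simp
  simpa only [lintegral_indicator_one (hs_meas _)] using h_indicator

theorem upperSemicontinuous_integral_measureReal [IsFiniteMeasure μ] (P : Measure Y)
    [IsFiniteMeasure P] {s : X → Y → Set Ω} (hs_meas : ∀ x y, MeasurableSet (s x y))
    (hs_closed : ∀ᵐ ω ∂μ, IsClosed {p : X × Y | ω ∈ s p.1 p.2}) :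
    UpperSemicontinuous fun x ↦ ∫ y, μ.real (s x y) ∂P := by
  have h_joint : UpperSemicontinuous fun p : X × Y ↦ μ (s p.1 p.2) :=
    upperSemicontinuous_measure_of_isClosed μ (fun p ↦ hs_meas p.1 p.2) hs_closed
  have h_meas (x : X) : Measurable fun y ↦ μ (s x y) :=
    (h_joint.comp (Continuous.prodMk_right x)).measurable
  have h_fin : ∫⁻ _, μ Set.univ ∂P ≠ ⊤ := by
    rw [lintegral_const]
    finiteness
  have h_le (x : X) (y : Y) : μ (s x y) ≤ μ Set.univ := measure_mono (Set.subset_univ _)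
  have h_lintegral : UpperSemicontinuous fun x ↦ ∫⁻ y, μ (s x y) ∂P :=
    upperSemicontinuous_lintegral_of_dominated P _ h_meas (fun x ↦ ae_of_all P (h_le x)) h_fin
      (ae_of_all P fun y ↦ h_joint.comp (Continuous.prodMk_left y))
  have h_toReal (x : X) : ∫ y, μ.real (s x y) ∂P = (∫⁻ y, μ (s x y) ∂P).toReal :=
    integral_toReal (h_meas x).aemeasurable (ae_of_all P fun y ↦ measure_lt_top μ (s x y))
  simpa only [h_toReal] using upperSemicontinuous_toReal h_lintegral fun x ↦
    ne_top_of_le_ne_top h_fin (lintegral_mono (h_le x))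

end ParametricIntegrals

theorem upperSemicontinuous_integral_measureReal_setOf_mem {K E : Type*} [TopologicalSpace K]
    [CompactSpace K] [MeasurableSpace K] [OpensMeasurableSpace K] [PseudoMetricSpace E]
    [MeasurableSpace C(K, E)] [OpensMeasurableSpace C(K, E)] (μ : Measure K) [IsFiniteMeasure μ]
    (P : Measure C(K, E)) [IsFiniteMeasure P] {R : Set (E × E)} (hR : IsClosed R) :
    UpperSemicontinuous fun x : C(K, E) ↦ ∫ y, μ.real {v | (x v, y v) ∈ R} ∂P := by
  refine upperSemicontinuous_integral_measureReal μ P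
    (s := fun x y : C(K, E) ↦ {v | (x v, y v) ∈ R}) (fun x y ↦ ?_) (ae_of_all μ fun v ↦ ?_)
  · exact (hR.preimage (x.continuous.prodMk y.continuous)).measurableSet
  · have h_eval : Continuous fun p : C(K, E) × C(K, E) ↦ (p.1 v, p.2 v) := by fun_prop
    exact hR.preimage h_eval

instance isFiniteMeasure_lamV (V : Set ℝ) [CompactSpace V] : IsFiniteMeasure (lamV V) := by
  have hV : IsCompact V := isCompact_iff_compactSpace.2 inferInstance
  have : IsFiniteMeasureOnCompacts (lamV V) :=
    .comap' volume continuous_subtype_val (.subtype_coe hV.measurableSet)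
  infer_instance

theorem upperSemicontinuous_DMHR {V : Set ℝ} [CompactSpace V] [MeasurableSpace C(V, ℝ)]
    [OpensMeasurableSpace C(V, ℝ)] (P : Measure C(V, ℝ)) [IsFiniteMeasure P] :
    UpperSemicontinuous fun x ↦ DMHR x P := by
  have h_below : UpperSemicontinuous fun x : C(V, ℝ) ↦ ∫ y, (lamV V).real {v | y v ≤ x v} ∂P :=
    upperSemicontinuous_integral_measureReal_setOf_mem (lamV V) P
      (isClosed_le continuous_snd continuous_fst)
  have h_above : UpperSemicontinuous fun x : C(V, ℝ) ↦ ∫ y, (lamV V).real {v | x v ≤ y v} ∂P :=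
    upperSemicontinuous_integral_measureReal_setOf_mem (lamV V) P
      (isClosed_le continuous_fst continuous_snd)
  exact (continuous_id.div_const _).comp_upperSemicontinuous (h_below.inf h_above)
    fun _ _ h ↦ div_le_div_of_nonneg_right h ENNReal.toReal_nonneg

/-- For `V` a compact subset of `ℝ` with `λ(V) > 0` and `P` a Borel
probability measure on `C(V)`, the modified half region depth `x ↦ D_MHR(x, P)` is upper
semi-continuous w.r.t. the supremum norm. -/
theorem stmt_8 (V : Set ℝ) [CompactSpace V] (hV : IsCompact V)
    (hVpos : 0 < volume V)
    [MeasurableSpace C(V, ℝ)] [BorelSpace C(V, ℝ)]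
    (P : Measure C(V, ℝ)) [IsProbabilityMeasure P] :
    ∀ x : C(V, ℝ), ∀ ε > (0 : ℝ), ∃ δ > (0 : ℝ), ∀ y : C(V, ℝ),
      ‖y - x‖ < δ → DMHR y P ≤ DMHR x P + ε := by
  intro x ε hε
  have h_near : ∀ᶠ y in 𝓝 x, DMHR y P < DMHR x P + ε :=
    upperSemicontinuous_DMHR P x _ (lt_add_of_pos_right _ hε)
  obtain ⟨δ, hδ, h_ball⟩ := Metric.eventually_nhds_iff.1 h_near
  exact ⟨δ, hδ, fun y hy ↦ (h_ball (by rwa [dist_eq_norm])).le⟩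
end

section
/- Let V be a compact subset of ℝ with Lebesgue measure λ(V) > 0, let α, b ∈ C(V) with α(v) > 0 for all v ∈ V, and let T : C(V) → C(V) be the map T(y)(v) = α(v)y(v) + b(v). Then for every Borel probability measure P on C(V) and every x ∈ C(V), D_MHR(T(x), T_*P) = D_MHR(x, P), where T_*P is the pushforward of P under T. -/
/-!
Since `α > 0`, the map `T` preserves and reflects the order of function values at each point of `V`,
so the sets in the depth are the same for `T y, T x` as for `y, x`. As `α` is a unit of `C(V, ℝ)`,
`T` is a homeomorphism of `C(V, ℝ)`, hence a measurable embedding, along which every integral can be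
transported, whether or not the integrand is known to be measurable.
-/

open MeasureTheory Filter Topology

theorem isHomeomorph_mul_add_const {R : Type*} [Ring R] [TopologicalSpace R] [IsTopologicalRing R]
    {a : R} (ha : IsUnit a) (b : R) : IsHomeomorph fun y => a * y + b := by
  obtain ⟨u, rfl⟩ := ha
  exact (Homeomorph.addRight b).isHomeomorph.comp (isHomeomorph_smul u)

theorem measurableEmbedding_mul_add_const {R : Type*} [Ring R] [TopologicalSpace R]
    [IsTopologicalRing R] [MeasurableSpace R] [BorelSpace R] {a : R} (ha : IsUnit a) (b : R) :
    MeasurableEmbedding fun y => a * y + b :=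
  (isHomeomorph_mul_add_const ha b).homeomorph.measurableEmbedding

theorem mul_add_apply_le_mul_add_apply_iff {X R : Type*} [TopologicalSpace X] [Semiring R]
    [LinearOrder R] [IsStrictOrderedRing R] [TopologicalSpace R] [IsTopologicalSemiring R]
    {α : C(X, R)} {v : X} (hα : 0 < α v) (b y z : C(X, R)) :
    (α * y + b) v ≤ (α * z + b) v ↔ y v ≤ z v := by
  simp only [ContinuousMap.add_apply, ContinuousMap.mul_apply, add_le_add_iff_right,
    mul_le_mul_iff_right₀ hα]

theorem stmt_11_general {V : Set ℝ} [CompactSpace V] (_hVpos : 0 < volume V)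
    [MeasurableSpace C(V, ℝ)] {T : C(V, ℝ) → C(V, ℝ)} (hT : MeasurableEmbedding T)
    (hT_le : ∀ y z v, T y v ≤ T z v ↔ y v ≤ z v) (P : Measure C(V, ℝ)) (x : C(V, ℝ)) :
    DMHR (T x) (P.map T) = DMHR x P := by
  simp only [DMHR, hT.integral_map, hT_le]

/-- The modified half region depth is invariant under the transformation
`T(y) = α·y + b` with `α(v) > 0` for all `v`: `D_MHR(T x, T_*P) = D_MHR(x, P)`. -/
theorem stmt_11 (V : Set ℝ) [CompactSpace V] (hV : IsCompact V)
    (hVpos : 0 < volume V)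
    [MeasurableSpace C(V, ℝ)] [BorelSpace C(V, ℝ)]
    (α b : C(V, ℝ)) (hα : ∀ v, 0 < α v)
    (P : Measure C(V, ℝ)) [IsProbabilityMeasure P] (x : C(V, ℝ)) :
    DMHR (α * x + b) (P.map fun y => α * y + b) = DMHR x P := by
  have hα_unit : IsUnit α := α.isUnit_iff_forall_ne_zero.mpr fun v => (hα v).ne'
  exact stmt_11_general hVpos (measurableEmbedding_mul_add_const hα_unit b)
    (fun y z v => mul_add_apply_le_mul_add_apply_iff (hα v) b y z) P x
end

section
/- Let V be a nonempty compact subset of ℝ, let α, b ∈ C(V) with α(v) > 0 for all v ∈ V, let T : C(V) → C(V) be the map T(y)(v) = α(v)y(v) + b(v), and let J ≥ 2. Then for every Borel probability measure P on C(V) and every x ∈ C(V), D_J(T(x), T_*P) = D_J(x, P), where T_*P is the pushforward of P under T. In particular, for all y₁,…,y_j ∈ C(V), x ∈ S(y₁,…,y_j) if and only if T(x) ∈ S(T(y₁),…,T(y_j)). -/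
/-!
`InSimplex x y` says that `x` lies in the convex hull of the `y k`, a condition that injective
affine maps preserve and reflect. Hence, under a continuous affine equivalence `e`, the event whose
probability enters the depth of `e x` pulls back to the event for `x`. As `e` is a measurable
equivalence, taking product measures commutes with pushing forward along it, even on sets not known
to be measurable, so the depths agree. Multiplication by a nowhere vanishing function followed by
a translation is such an equivalence.
-/

open MeasureTheory Filter Topology

/-- `x` belongs to the simplex (band) spanned by `y₁, …, y_j`: there are convex weights
`w` with `x(v) = Σ_k w_k y_k(v)` for all `v`. -/
def InSimplex {V : Set ℝ} {j : ℕ} (x : C(V, ℝ)) (y : Fin j → C(V, ℝ)) : Prop :=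
  ∃ w : Fin j → ℝ, (∀ k, 0 ≤ w k) ∧ (∑ k, w k = 1) ∧ ∀ v, x v = ∑ k, w k * y k v

/-- The band depth `D_J(x,P) = Σ_{j=2}^{J} P^{⊗j}({y : x ∈ S(y₁,…,y_j)})`. -/
noncomputable def DJ {V : Set ℝ} [CompactSpace V] [MeasurableSpace C(V, ℝ)]
    (J : ℕ) (x : C(V, ℝ)) (P : Measure C(V, ℝ)) : ℝ :=
  ∑ j ∈ Finset.Icc 2 J,
    ((Measure.pi fun _ : Fin j => P) {y | InSimplex x y}).toReal

/-- The continuous affine self-equivalence `y ↦ a * y + b` of a topological algebra, for a unit `a`;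
in `C(V, ℝ)` the units are the nowhere vanishing functions. The translation is `vaddConst`, so that
the underlying function is definitionally `fun y ↦ a * y + b`. -/
def unitMulAddEquiv (k : Type*) {A : Type*} [CommRing k] [Ring A] [Algebra k A]
    [TopologicalSpace A] [IsTopologicalRing A] (a : Aˣ) (b : A) : A ≃ᴬ[k] A :=
  (ContinuousLinearEquiv.smulLeft a : A ≃L[k] A).toContinuousAffineEquiv.trans
    (ContinuousAffineEquiv.vaddConst k b)

theorem pi_map_measurableEquiv_apply {ι : Type*} [Fintype ι] {X Y : ι → Type*}
    [∀ i, MeasurableSpace (X i)] [∀ i, MeasurableSpace (Y i)] (μ : ∀ i, Measure (X i))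
    [∀ i, SigmaFinite (μ i)] (e : ∀ i, X i ≃ᵐ Y i) (s : Set (∀ i, Y i)) :
    Measure.pi (fun i ↦ (μ i).map (e i)) s = Measure.pi μ {x | (fun i ↦ e i (x i)) ∈ s} := by
  have (i : ι) : SigmaFinite ((μ i).map (e i)) := (e i).sigmaFinite_map
  rw [← Measure.pi_map_pi fun i ↦ (e i).measurable.aemeasurable]
  exact (MeasurableEquiv.piCongrRight e).map_apply s

theorem convexHull_range_eq_image_stdSimplex (k : Type*) [Field k] [LinearOrder k]
    [IsStrictOrderedRing k] {E ι : Type*} [AddCommGroup E] [Module k E] [Fintype ι] (y : ι → E) :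
    convexHull k (Set.range y) = Fintype.linearCombination k y '' stdSimplex k ι := by
  classical
  have map_vertex : Fintype.linearCombination k y ∘ (fun i ↦ Pi.single i 1) = y := by
    ext i
    simp
  rw [← convexHull_rangle_single_eq_stdSimplex, LinearMap.image_convexHull, ← Set.range_comp,
    map_vertex]

section BandDepth

variable {V W : Set ℝ}

theorem inSimplex_iff_mem_convexHull_range {j : ℕ} {x : C(V, ℝ)} {y : Fin j → C(V, ℝ)} :
    InSimplex x y ↔ x ∈ convexHull ℝ (Set.range y) := by
  simp [convexHull_range_eq_image_stdSimplex, InSimplex, stdSimplex, ContinuousMap.ext_iff,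
    Fintype.linearCombination_apply, and_assoc, eq_comm (a := x _)]

theorem inSimplex_map_iff {f : C(V, ℝ) →ᵃ[ℝ] C(W, ℝ)} (hf : Function.Injective f) {j : ℕ}
    {x : C(V, ℝ)} {y : Fin j → C(V, ℝ)} :
    InSimplex (f x) (fun k ↦ f (y k)) ↔ InSimplex x y := by
  have range_map : Set.range (fun k ↦ f (y k)) = f '' Set.range y := Set.range_comp f y
  rw [inSimplex_iff_mem_convexHull_range, inSimplex_iff_mem_convexHull_range, range_map,
    ← f.image_convexHull, hf.mem_set_image]

variable [CompactSpace V] [CompactSpace W] [MeasurableSpace C(V, ℝ)] [BorelSpace C(V, ℝ)]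
  [MeasurableSpace C(W, ℝ)] [BorelSpace C(W, ℝ)]

theorem DJ_map (e : C(V, ℝ) ≃ᴬ[ℝ] C(W, ℝ)) (J : ℕ) (P : Measure C(V, ℝ)) [SigmaFinite P]
    (x : C(V, ℝ)) : DJ J (e x) (P.map e) = DJ J x P := by
  refine Finset.sum_congr rfl fun j _ ↦ congrArg ENNReal.toReal ?_
  calc Measure.pi (fun _ : Fin j ↦ P.map e) {z | InSimplex (e x) z}
      = Measure.pi (fun _ : Fin j ↦ P) {y | InSimplex (e x) fun k ↦ e (y k)} :=
        pi_map_measurableEquiv_apply _ (fun _ ↦ e.toHomeomorph.toMeasurableEquiv) _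
    _ = Measure.pi (fun _ : Fin j ↦ P) {y | InSimplex x y} :=
        congrArg _ <| Set.ext fun _ ↦
          inSimplex_map_iff (f := e.toAffineEquiv.toAffineMap) e.injective

theorem stmt_12_general (e : C(V, ℝ) ≃ᴬ[ℝ] C(W, ℝ)) (J : ℕ) (P : Measure C(V, ℝ)) [SigmaFinite P]
    (x : C(V, ℝ)) :
    DJ J (e x) (P.map e) = DJ J x P ∧
    ∀ (j : ℕ) (y : Fin j → C(V, ℝ)), InSimplex x y ↔ InSimplex (e x) (fun k ↦ e (y k)) :=
  ⟨DJ_map e J P x, fun _ _ ↦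
    (inSimplex_map_iff (f := e.toAffineEquiv.toAffineMap) e.injective).symm⟩

end BandDepth

/-- The band depth is invariant under the transformation `T(y) = α·y + b`
with `α(v) > 0` for all `v`: `D_J(T x, T_*P) = D_J(x, P)`; in particular membership in
the simplex is preserved: `x ∈ S(y₁,…,y_j) ↔ T x ∈ S(T y₁,…,T y_j)`. -/
theorem stmt_12 (V : Set ℝ) [CompactSpace V] (hV : IsCompact V) (hne : V.Nonempty)
    [MeasurableSpace C(V, ℝ)] [BorelSpace C(V, ℝ)]
    (α b : C(V, ℝ)) (hα : ∀ v, 0 < α v)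
    (J : ℕ) (hJ : 2 ≤ J)
    (P : Measure C(V, ℝ)) [IsProbabilityMeasure P] (x : C(V, ℝ)) :
    DJ J (α * x + b) (P.map fun y => α * y + b) = DJ J x P ∧
    ∀ (j : ℕ) (y : Fin j → C(V, ℝ)),
      InSimplex x y ↔ InSimplex (α * x + b) (fun k => α * y k + b) := by
  obtain ⟨a, rfl⟩ := α.isUnit_iff_forall_ne_zero.2 fun v ↦ (hα v).ne'
  exact stmt_12_general (unitMulAddEquiv ℝ a b) J P x
end

section
/- Let H be a separable real Hilbert space, 𝔘 ⊂ H a finite nonempty set, c ∈ ℝ with c ≠ 0, b ∈ H, and T : H → H the map T(y) = c·y + b. Then for every Borel probability measure P on H and every x ∈ H, D_RT(T(x), T_*P) = D_RT(x, P), where T_*P is the pushforward of P under T and both depths are computed with the same set 𝔘. -/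
/-!
Projecting onto `u` turns `T` into the affine map `s ↦ c * s + ⟪u, b⟫` of the line. For `c > 0` such
a map preserves each of the two half-lines at `t`; for `c < 0` it exchanges them, and the minimum in
`D1` is symmetric.
-/

open MeasureTheory Filter Topology
open scoped RealInnerProductSpace

theorem D1_map_of_strictMono {f : ℝ → ℝ} (hf : StrictMono f) (Q : Measure ℝ) (t : ℝ) :
    D1 (Q.map f) (f t) = D1 Q t := by
  have preimage_Iic : f ⁻¹' Set.Iic (f t) = Set.Iic t := Set.ext fun _ => hf.le_iff_le
  have preimage_Ici : f ⁻¹' Set.Ici (f t) = Set.Ici t := Set.ext fun _ => hf.le_iff_le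
  have hf_meas : Measurable f := hf.monotone.measurable
  rw [D1, Measure.map_apply hf_meas measurableSet_Iic, Measure.map_apply hf_meas measurableSet_Ici,
    preimage_Iic, preimage_Ici, D1]

theorem D1_map_of_strictAnti {f : ℝ → ℝ} (hf : StrictAnti f) (Q : Measure ℝ) (t : ℝ) :
    D1 (Q.map f) (f t) = D1 Q t := by
  have preimage_Iic : f ⁻¹' Set.Iic (f t) = Set.Ici t := Set.ext fun _ => hf.le_iff_ge
  have preimage_Ici : f ⁻¹' Set.Ici (f t) = Set.Iic t := Set.ext fun _ => hf.le_iff_ge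
  have hf_meas : Measurable f := hf.antitone.measurable
  rw [D1, Measure.map_apply hf_meas measurableSet_Iic, Measure.map_apply hf_meas measurableSet_Ici,
    preimage_Iic, preimage_Ici, min_comm, D1]

theorem D1_map_mul_add {c : ℝ} (hc : c ≠ 0) (d : ℝ) (Q : Measure ℝ) (t : ℝ) :
    D1 (Q.map fun s => c * s + d) (c * t + d) = D1 Q t := by
  rcases hc.lt_or_gt with c_neg | c_pos
  · exact D1_map_of_strictAnti ((strictAnti_mul_left c_neg).add_const d) Q t
  · exact D1_map_of_strictMono ((strictMono_mul_left_of_pos c_pos).add_const d) Q t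

section InnerProductSpace

variable {H : Type*} [NormedAddCommGroup H] [InnerProductSpace ℝ H] [MeasurableSpace H]
  [BorelSpace H]

theorem map_inner_map_smul_add (c : ℝ) (b u : H) (P : Measure H) :
    (P.map fun y => c • y + b).map (fun y => ⟪u, y⟫) =
      (P.map fun y => ⟪u, y⟫).map fun s => c * s + ⟪u, b⟫ := by
  have inner_meas : Measurable fun y : H => ⟪u, y⟫ := by fun_prop
  -- Through continuity, as addition on a nonseparable `H` need not be jointly measurable.
  have affine_meas : Measurable fun y : H => c • y + b := Continuous.measurable (by fun_prop)
  rw [Measure.map_map inner_meas affine_meas, Measure.map_map (by fun_prop) inner_meas]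
  congr 1
  funext y
  simp only [Function.comp_apply, inner_add_right, real_inner_smul_right]

theorem stmt_14_general (U : Finset H) (hU : U.Nonempty) {c : ℝ} (hc : c ≠ 0) (b : H)
    (P : Measure H) (x : H) :
    DRT U hU (c • x + b) (P.map fun y => c • y + b) = DRT U hU x P := by
  refine Finset.inf'_congr hU rfl fun u _ => ?_
  rw [map_inner_map_smul_add, inner_add_right, real_inner_smul_right, D1_map_mul_add hc]

end InnerProductSpace

/-- For `c ≠ 0` and `T(y) = c•y + b`, the random Tukey depth computed with
the same finite set `U` satisfies `D_RT(T x, T_*P) = D_RT(x, P)`. -/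
theorem stmt_14 {H : Type*} [NormedAddCommGroup H] [InnerProductSpace ℝ H]
    [CompleteSpace H] [TopologicalSpace.SeparableSpace H]
    [MeasurableSpace H] [BorelSpace H]
    (U : Finset H) (hU : U.Nonempty)
    (c : ℝ) (hc : c ≠ 0) (b : H)
    (P : Measure H) [IsProbabilityMeasure P] (x : H) :
    DRT U hU (c • x + b) (P.map fun y => c • y + b) = DRT U hU x P :=
  stmt_14_general U hU hc b P x
end

section
/- Let V be a nonempty compact subset of ℝ, let c > 0, and let P = ½δ_{f₁} + ½δ_{f₂} be the Borel probability measure on C(V) assigning mass ½ to each of the constant functions f₁ ≡ −c and f₂ ≡ c. Then for every x ∈ C(V) satisfying −c < x(v) < c for all v ∈ V, D_HR(x,P) = 1/2. In particular, D_HR(·,P) is constant on this set, so the half region depth is not strictly decreasing with respect to a deepest point. -/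
/-! In the pointwise order on `C(V, ℝ)` the hypograph and epigraph regions of `x` are the order
rays `Iic x` and `Ici x`. If `f₁ < x < f₂`, then `Iic x` contains `f₁` but not `f₂`, and
`Ici x` contains `f₂` but not `f₁`, so each region carries exactly the weight of one atom. -/

open MeasureTheory Filter Topology
open scoped ENNReal

open Set
open scoped NNReal

section TwoAtoms

variable {α : Type*} [MeasurableSpace α] [MeasurableSingletonClass α] {a b x : α}

theorem measureReal_smul_dirac_add_smul_dirac_of_mem_of_notMem {s : Set α}
    (ha : a ∈ s) (hb : b ∉ s) (p q : ℝ≥0) :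
    (p • Measure.dirac a + q • Measure.dirac b).real s = p := by
  have dirac_a : (Measure.dirac a).real s = 1 := by simp [measureReal_def, ha]
  have dirac_b : (Measure.dirac b).real s = 0 := by simp [measureReal_def, hb]
  rw [measureReal_add_apply, measureReal_nnreal_smul_apply, measureReal_nnreal_smul_apply,
    dirac_a, dirac_b, mul_one, mul_zero, add_zero]

variable [Preorder α]

theorem measureReal_smul_dirac_add_smul_dirac_Iic (hax : a ≤ x) (hxb : x < b) (p q : ℝ≥0) :
    (p • Measure.dirac a + q • Measure.dirac b).real (Iic x) = p :=
  measureReal_smul_dirac_add_smul_dirac_of_mem_of_notMem (mem_Iic.2 hax)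
    (mt mem_Iic.1 hxb.not_ge) p q

theorem measureReal_smul_dirac_add_smul_dirac_Ici (hax : a < x) (hxb : x ≤ b) (p q : ℝ≥0) :
    (p • Measure.dirac a + q • Measure.dirac b).real (Ici x) = q := by
  rw [add_comm]
  exact measureReal_smul_dirac_add_smul_dirac_of_mem_of_notMem (mem_Ici.2 hxb)
    (mt mem_Ici.1 hax.not_ge) q p

end TwoAtoms

theorem continuousMap_lt_of_forall_lt {X β : Type*} [TopologicalSpace X] [Nonempty X]
    [TopologicalSpace β] [PartialOrder β] {f g : C(X, β)} (h : ∀ v, f v < g v) : f < g :=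
  ContinuousMap.lt_def.2 ⟨fun v => (h v).le, ‹Nonempty X›.elim fun v => ⟨v, h v⟩⟩

section HalfRegionDepth

variable {V : Set ℝ} [CompactSpace V] [MeasurableSpace C(V, ℝ)]

theorem DHR_eq_min_measureReal_Iic_Ici (x : C(V, ℝ)) (P : Measure C(V, ℝ)) :
    DHR x P = min (P.real (Iic x)) (P.real (Ici x)) :=
  rfl

theorem stmt_16_general [MeasurableSingletonClass C(V, ℝ)] {f₁ f₂ x : C(V, ℝ)}
    (h₁ : f₁ < x) (h₂ : x < f₂) (p q : ℝ≥0) :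
    DHR x (p • Measure.dirac f₁ + q • Measure.dirac f₂) = min (p : ℝ) q := by
  rw [DHR_eq_min_measureReal_Iic_Ici, measureReal_smul_dirac_add_smul_dirac_Iic h₁.le h₂,
    measureReal_smul_dirac_add_smul_dirac_Ici h₁ h₂.le]

end HalfRegionDepth

/-- For `P = ½δ_{−c} + ½δ_{c}` (Dirac masses at the constant functions
`−c` and `c`), every `x` with `−c < x(v) < c` for all `v` has `D_HR(x, P) = 1/2`; hence
the half region depth is constant on this set. -/
theorem stmt_16 (V : Set ℝ) [CompactSpace V] (hV : IsCompact V) (hne : V.Nonempty)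
    [MeasurableSpace C(V, ℝ)] [BorelSpace C(V, ℝ)]
    (c : ℝ) (hc : 0 < c)
    (x : C(V, ℝ)) (hx : ∀ v, -c < x v ∧ x v < c) :
    DHR x ((2 : ℝ≥0∞)⁻¹ • Measure.dirac (ContinuousMap.const V (-c)) +
        (2 : ℝ≥0∞)⁻¹ • Measure.dirac (ContinuousMap.const V c)) = 1 / 2 := by
  have : Nonempty V := hne.to_subtype
  have lower : ContinuousMap.const V (-c) < x := continuousMap_lt_of_forall_lt fun v => (hx v).1
  have upper : x < ContinuousMap.const V c := continuousMap_lt_of_forall_lt fun v => (hx v).2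
  simpa [ENNReal.smul_def] using stmt_16_general lower upper 2⁻¹ 2⁻¹
end

section
/- Let V be a compact subset of ℝ with Lebesgue measure λ(V) > 0, let c > 0, and let P = ½δ_{f₁} + ½δ_{f₂} be the Borel probability measure on C(V) assigning mass ½ to each of the constant functions f₁ ≡ −c and f₂ ≡ c. Then for every x ∈ C(V) satisfying −c < x(v) < c for all v ∈ V, D_MHR(x,P) = 1/2. In particular, D_MHR(·,P) is constant on this set, so the modified half region depth is not strictly decreasing with respect to a deepest point. -/
/-!
A function `f` lying below `x` contributes `λ(V)` to the first integral in the depth and `0` to the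
second, while a function `g` lying above `x` does the opposite. So for `P = aδ_f + bδ_g` with
`f < x < g` the two integrals are `a λ(V)` and `b λ(V)`, and the depth of `x` is `min a b`, wherever
`x` sits between `f` and `g`.
-/

open MeasureTheory Filter Topology
open scoped ENNReal

theorem measure_setOf_le_eq_univ_of_ae_le {α β : Type*} [MeasurableSpace α] [LE β] {μ : Measure α}
    {f g : α → β} (h : f ≤ᵐ[μ] g) : μ {v | f v ≤ g v} = μ Set.univ :=
  measure_congr (eventuallyEq_univ.2 h)

theorem measure_setOf_le_eq_zero_of_ae_lt {α β : Type*} [MeasurableSpace α] [Preorder β]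
    {μ : Measure α} {f g : α → β} (h : ∀ᵐ v ∂μ, g v < f v) : μ {v | f v ≤ g v} = 0 :=
  measure_eq_zero_iff_ae_notMem.2 (h.mono fun _ => not_le_of_gt)

theorem integral_smul_dirac_add_smul_dirac {α E : Type*} [MeasurableSpace α]
    [MeasurableSingletonClass α] [NormedAddCommGroup E] [NormedSpace ℝ E] [CompleteSpace E]
    {a b : ℝ≥0∞} (ha : a ≠ ∞) (hb : b ≠ ∞) (f g : α) (F : α → E) :
    ∫ y, F y ∂(a • Measure.dirac f + b • Measure.dirac g) = a.toReal • F f + b.toReal • F g := by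
  have integrable_dirac_self (p : α) : Integrable F (Measure.dirac p) :=
    integrable_dirac enorm_lt_top
  rw [integral_add_measure ((integrable_dirac_self f).smul_measure ha)
      ((integrable_dirac_self g).smul_measure hb),
    integral_smul_measure, integral_smul_measure, integral_dirac, integral_dirac]

theorem lamV_univ {V : Set ℝ} (hV : MeasurableSet V) : lamV V Set.univ = volume V := by
  rw [lamV, comap_subtype_coe_apply hV, Set.image_univ, Subtype.range_coe]

theorem lamV_univ_toReal_pos {V : Set ℝ} (hV : IsCompact V) (hVpos : 0 < volume V) :
    0 < (lamV V Set.univ).toReal := by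
  rw [lamV_univ hV.measurableSet]
  exact ENNReal.toReal_pos hVpos.ne' hV.measure_lt_top.ne

theorem stmt_17_general {V : Set ℝ} [CompactSpace V] (hVpos : 0 < volume V)
    [MeasurableSpace C(V, ℝ)] [MeasurableSingletonClass C(V, ℝ)]
    {a b : ℝ≥0∞} (ha : a ≠ ∞) (hb : b ≠ ∞) {f g x : C(V, ℝ)}
    (hfx : ∀ᵐ v ∂lamV V, f v < x v) (hxg : ∀ᵐ v ∂lamV V, x v < g v) :
    DMHR x (a • Measure.dirac f + b • Measure.dirac g) = min a.toReal b.toReal := by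
  have hpos := lamV_univ_toReal_pos (isCompact_iff_compactSpace.2 inferInstance) hVpos
  have hfx_le : f ≤ᵐ[lamV V] x := hfx.mono fun _ => le_of_lt
  have hxg_le : x ≤ᵐ[lamV V] g := hxg.mono fun _ => le_of_lt
  rw [DMHR, integral_smul_dirac_add_smul_dirac ha hb, integral_smul_dirac_add_smul_dirac ha hb,
    measure_setOf_le_eq_univ_of_ae_le hfx_le, measure_setOf_le_eq_zero_of_ae_lt hxg,
    measure_setOf_le_eq_zero_of_ae_lt hfx, measure_setOf_le_eq_univ_of_ae_le hxg_le]
  simp only [ENNReal.toReal_zero, smul_eq_mul, mul_zero, add_zero, zero_add]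
  rw [← min_mul_of_nonneg _ _ hpos.le, mul_div_cancel_right₀ _ hpos.ne']

/-- For `P = ½δ_{−c} + ½δ_{c}` (Dirac masses at the constant functions
`−c` and `c`) on `C(V)` with `λ(V) > 0`, every `x` with `−c < x(v) < c` for all `v` has
`D_MHR(x, P) = 1/2`; hence the modified half region depth is constant on this set. -/
theorem stmt_17 (V : Set ℝ) [CompactSpace V] (hV : IsCompact V)
    (hVpos : 0 < volume V)
    [MeasurableSpace C(V, ℝ)] [BorelSpace C(V, ℝ)]
    (c : ℝ) (hc : 0 < c)
    (x : C(V, ℝ)) (hx : ∀ v, -c < x v ∧ x v < c) :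
    DMHR x ((2 : ℝ≥0∞)⁻¹ • Measure.dirac (ContinuousMap.const V (-c)) +
        (2 : ℝ≥0∞)⁻¹ • Measure.dirac (ContinuousMap.const V c)) = 1 / 2 := by
  simpa using stmt_17_general hVpos (a := 2⁻¹) (b := 2⁻¹) (by simp) (by simp)
    (.of_forall fun v => (hx v).1) (.of_forall fun v => (hx v).2)
end

section
/- Let H be a separable real Hilbert space, h > 0, x ∈ H, P a Borel probability measure on H, and f : H → H a Borel measurable map such that ‖f(x) − f(y)‖ ≤ ‖x − y‖ for all y ∈ H. Then D_h(f(x), f_*P) ≥ D_h(x, P), where f_*P is the pushforward of P under f. If moreover P({y : ‖f(x) − f(y)‖ < ‖x − y‖}) > 0, then D_h(f(x), f_*P) > D_h(x, P). -/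
open MeasureTheory Filter Topology

/-! Change of variables turns the depth of `z` under `f_*μ` into the `μ`-integral of
`K (d(z, f y))`. As `K` is decreasing and `d(z, f y) ≤ d(x, y)`, this integrand dominates
`K (d(x, y))`, whose integral is the depth of `x` under `μ`, and it is strictly larger wherever the
contraction is strict. For the theorem, `K` is the Gaussian kernel and `z = f x`. -/

open scoped NNReal

/-- The depth of `x` with respect to `μ` for a radial kernel `K`: the `μ`-integral of the kernel at
the distance from `x`. The paper's `D_h(x, P)` is `kernelDepth (gaussianKernel h) x P`. Kernels are
functions on `ℝ≥0`, so that monotonicity assumptions concern only genuine distances. -/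
noncomputable def kernelDepth {E : Type*} [PseudoMetricSpace E] [MeasurableSpace E]
    (K : ℝ≥0 → ℝ) (x : E) (μ : Measure E) : ℝ :=
  ∫ y, K (nndist x y) ∂μ

/-- The radial profile of the Gaussian kernel with bandwidth `h`. The normalization is that of a
density on the real line, whatever the space in which distances are measured. -/
noncomputable def gaussianKernel (h : ℝ) (r : ℝ≥0) : ℝ :=
  (h * Real.sqrt (2 * Real.pi))⁻¹ * Real.exp (-(r : ℝ) ^ 2 / (2 * h ^ 2))

lemma kernelDepth_gaussianKernel {E : Type*} [SeminormedAddCommGroup E] [MeasurableSpace E]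
    (h : ℝ) (x : E) (μ : Measure E) :
    kernelDepth (gaussianKernel h) x μ =
      ∫ y, (h * Real.sqrt (2 * Real.pi))⁻¹ * Real.exp (-‖x - y‖ ^ 2 / (2 * h ^ 2)) ∂μ := by
  simp only [kernelDepth, gaussianKernel, coe_nndist, dist_eq_norm]

lemma gaussianKernel_strictAnti {h : ℝ} (hh : 0 < h) : StrictAnti (gaussianKernel h) := by
  intro r s hrs
  unfold gaussianKernel
  gcongr

lemma gaussianKernel_nonneg {h : ℝ} (hh : 0 ≤ h) (r : ℝ≥0) : 0 ≤ gaussianKernel h r := by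
  unfold gaussianKernel
  positivity

lemma bddBelow_range_gaussianKernel {h : ℝ} (hh : 0 ≤ h) :
    BddBelow (Set.range (gaussianKernel h)) :=
  ⟨0, Set.forall_mem_range.2 (gaussianKernel_nonneg hh)⟩

lemma integral_lt_integral_of_ae_le_of_measure_lt_pos {α : Type*} [MeasurableSpace α]
    {μ : Measure α} {f g : α → ℝ} (hf : Integrable f μ) (hg : Integrable g μ) (hle : f ≤ᵐ[μ] g)
    (hpos : 0 < μ {a | f a < g a}) : ∫ a, f a ∂μ < ∫ a, g a ∂μ := by
  have hsupport : {a | f a < g a} ⊆ Function.support (g - f) :=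
    fun _ ha => (sub_pos.2 ha).ne'
  rw [← sub_pos, ← integral_sub' hg hf,
    integral_pos_iff_support_of_nonneg_ae ((sub_nonneg_ae f g).2 hle) (hg.sub hf)]
  exact hpos.trans_le (measure_mono hsupport)

lemma integrable_antitone_comp {α β : Type*} [MeasurableSpace α] {μ : Measure α}
    [IsFiniteMeasure μ] [LinearOrder β] [OrderBot β] [TopologicalSpace β] [OrderClosedTopology β]
    [MeasurableSpace β] [BorelSpace β] {K : β → ℝ} (hK : Antitone K)
    (hbdd : BddBelow (Set.range K)) {g : α → β} (hg : AEMeasurable g μ) :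
    Integrable (fun a => K (g a)) μ := by
  obtain ⟨m, hm⟩ := hbdd
  exact Integrable.of_mem_Icc m (K ⊥) (hK.measurable.comp_aemeasurable hg)
    (ae_of_all μ fun a => ⟨hm (Set.mem_range_self (g a)), hK bot_le⟩)

lemma measurable_nndist_right {E : Type*} [PseudoMetricSpace E] [MeasurableSpace E]
    [OpensMeasurableSpace E] (x : E) : Measurable fun y => nndist x y :=
  (continuous_const.nndist continuous_id).measurable

section KernelDepth

variable {α F : Type*} [MeasurableSpace α] [PseudoMetricSpace F] [MeasurableSpace F]
  [OpensMeasurableSpace F] {K : ℝ≥0 → ℝ} {μ : Measure α} {f : α → F}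

lemma integrable_kernel_nndist [IsFiniteMeasure μ] (hK : Antitone K)
    (hbdd : BddBelow (Set.range K)) (hf : AEMeasurable f μ) (z : F) :
    Integrable (fun a => K (nndist z (f a))) μ :=
  integrable_antitone_comp hK hbdd ((measurable_nndist_right z).comp_aemeasurable hf)

lemma kernelDepth_map (hK : Measurable K) (hf : AEMeasurable f μ) (z : F) :
    kernelDepth K z (μ.map f) = ∫ a, K (nndist z (f a)) ∂μ :=
  integral_map hf (hK.comp (measurable_nndist_right z)).aestronglyMeasurable

end KernelDepth

section Contraction

variable {E F : Type*} [PseudoMetricSpace E] [MeasurableSpace E] [OpensMeasurableSpace E]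
  [PseudoMetricSpace F] [MeasurableSpace F] [OpensMeasurableSpace F]
  {K : ℝ≥0 → ℝ} {μ : Measure E} [IsFiniteMeasure μ] {f : E → F} {x : E} {z : F}

lemma kernelDepth_le_kernelDepth_map (hK : Antitone K) (hbdd : BddBelow (Set.range K))
    (hf : AEMeasurable f μ) (hcontr : ∀ᵐ y ∂μ, dist z (f y) ≤ dist x y) :
    kernelDepth K x μ ≤ kernelDepth K z (μ.map f) := by
  rw [kernelDepth_map hK.measurable hf]
  exact integral_mono_ae
    (integrable_kernel_nndist hK hbdd aemeasurable_id x)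
    (integrable_kernel_nndist hK hbdd hf z)
    (hcontr.mono fun _ hy => hK (NNReal.coe_le_coe.1 hy))

lemma kernelDepth_lt_kernelDepth_map (hK : StrictAnti K) (hbdd : BddBelow (Set.range K))
    (hf : AEMeasurable f μ) (hcontr : ∀ᵐ y ∂μ, dist z (f y) ≤ dist x y)
    (hpos : 0 < μ {y | dist z (f y) < dist x y}) :
    kernelDepth K x μ < kernelDepth K z (μ.map f) := by
  rw [kernelDepth_map hK.antitone.measurable hf]
  exact integral_lt_integral_of_ae_le_of_measure_lt_pos
    (integrable_kernel_nndist hK.antitone hbdd aemeasurable_id x)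
    (integrable_kernel_nndist hK.antitone hbdd hf z)
    (hcontr.mono fun _ hy => hK.antitone (NNReal.coe_le_coe.1 hy))
    (by simpa only [hK.lt_iff_gt, ← NNReal.coe_lt_coe, coe_nndist] using hpos)

theorem stmt_18_general (hK : StrictAnti K) (hbdd : BddBelow (Set.range K))
    (hf : AEMeasurable f μ) (hcontr : ∀ᵐ y ∂μ, dist z (f y) ≤ dist x y) :
    kernelDepth K x μ ≤ kernelDepth K z (μ.map f) ∧
      (0 < μ {y | dist z (f y) < dist x y} →
        kernelDepth K x μ < kernelDepth K z (μ.map f)) :=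
  ⟨kernelDepth_le_kernelDepth_map hK.antitone hbdd hf hcontr,
    kernelDepth_lt_kernelDepth_map hK hbdd hf hcontr⟩

end Contraction

/-- If `f` is Borel measurable and contracts distances to `x`
(`‖f x − f y‖ ≤ ‖x − y‖` for all `y`), then `D_h(f x, f_*P) ≥ D_h(x, P)`; with strict
inequality if the contraction is strict on a set of positive `P`-measure. -/
theorem stmt_18 {H : Type*} [NormedAddCommGroup H] [InnerProductSpace ℝ H]
    [CompleteSpace H] [TopologicalSpace.SeparableSpace H]
    [MeasurableSpace H] [BorelSpace H]
    (h : ℝ) (hh : 0 < h) (x : H)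
    (P : Measure H) [IsProbabilityMeasure P]
    (f : H → H) (hf : Measurable f)
    (hcontr : ∀ y : H, ‖f x - f y‖ ≤ ‖x - y‖) :
    (∫ y, (h * Real.sqrt (2 * Real.pi))⁻¹ *
        Real.exp (-‖x - y‖ ^ 2 / (2 * h ^ 2)) ∂P) ≤
      (∫ y, (h * Real.sqrt (2 * Real.pi))⁻¹ *
        Real.exp (-‖f x - y‖ ^ 2 / (2 * h ^ 2)) ∂(Measure.map f P)) ∧
    (0 < P {y | ‖f x - f y‖ < ‖x - y‖} →
      (∫ y, (h * Real.sqrt (2 * Real.pi))⁻¹ *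
          Real.exp (-‖x - y‖ ^ 2 / (2 * h ^ 2)) ∂P) <
        (∫ y, (h * Real.sqrt (2 * Real.pi))⁻¹ *
          Real.exp (-‖f x - y‖ ^ 2 / (2 * h ^ 2)) ∂(Measure.map f P))) := by
  have hcontr' : ∀ y, dist (f x) (f y) ≤ dist x y := by
    simpa only [dist_eq_norm] using hcontr
  simpa only [kernelDepth_gaussianKernel, dist_eq_norm] using
    stmt_18_general (gaussianKernel_strictAnti hh) (bddBelow_range_gaussianKernel hh.le)
      hf.aemeasurable (ae_of_all P hcontr')
end
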